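/- (Entropy statistic theorem) For any continuous linear functional μ on B(X, 𝔄) and any ε > 0, there exist a neighborhood O(μ) of μ in the weak-* topology on the dual of B(X, 𝔄) and a constant C(ε, μ) > 0 such that for all natural numbers n and all f ∈ L¹(X, m): ∫_{Xₙ(O(μ))} |f ∘ αⁿ| dm ≤ C(ε, μ)·e^{n(τ(μ)+ε)}·∫_X |f| dm, where Xₙ(O(μ)) = { x ∈ X : δ_{x,n} ∈ O(μ) }; if τ(μ) = −∞, the same conclusion holds with the exponent n(τ(μ)+ε) replaced by n·(−1/ε). -/

import Mathlib

open MeasureTheory Filter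
open scoped ENNReal NNReal

noncomputable section

def birkhoff {X : Type*} (α : X → X) (φ : X → ℝ) (n : ℕ) (x : X) : ℝ :=
  ∑ i ∈ Finset.range n, φ (α^[i] x)

def ShiftBounded {X : Type*} [MeasurableSpace X] (m : Measure X) (α : X → X) : Prop :=
  ∃ C : ℝ≥0, 0 < C ∧ ∀ G : Set X, MeasurableSet G → m (α ⁻¹' G) ≤ (C : ℝ≥0∞) * m G

def weightedOpNorm {X : Type*} [MeasurableSpace X] (m : Measure X) (α : X → X) (s : ℕ)
    (ψ : X → ℝ) (k : ℕ) : ℝ :=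
  sSup {r : ℝ | ∃ f : X → ℝ, Integrable f m ∧ (∫ x, |f x| ∂m) = 1 ∧
    r = ∫ x, Real.exp (∑ j ∈ Finset.range k, ψ (α^[s * j] x)) * |f (α^[s * k] x)| ∂m}

def spectralPotentialBase {X : Type*} [MeasurableSpace X] (m : Measure X) (α : X → X)
    (s : ℕ) (ψ : X → ℝ) : ℝ :=
  limUnder atTop fun k : ℕ => Real.log (weightedOpNorm m α s ψ k) / (k : ℝ)

def spectralPotential {X : Type*} [MeasurableSpace X] (m : Measure X) (α : X → X)
    (φ : X → ℝ) : ℝ :=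
  spectralPotentialBase m α 1 φ

/-- `f` belongs to `B(X, 𝔄)`: it is measurable and bounded. -/
def IsBddMeas {X : Type*} [MeasurableSpace X] (f : X → ℝ) : Prop :=
  Measurable f ∧ ∃ C : ℝ, ∀ x, |f x| ≤ C

/-- `μ` represents a continuous linear functional on the Banach space `B(X, 𝔄)` of bounded
measurable functions with the supremum norm: it is additive, homogeneous, and bounded with
respect to the supremum norm on `B(X, 𝔄)`. -/
def IsBFunctional {X : Type*} [MeasurableSpace X] (μ : (X → ℝ) → ℝ) : Prop :=
  (∀ f g : X → ℝ, IsBddMeas f → IsBddMeas g → μ (f + g) = μ f + μ g) ∧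
  (∀ (c : ℝ) (f : X → ℝ), IsBddMeas f → μ (c • f) = c * μ f) ∧
  ∃ K : ℝ, ∀ f : X → ℝ, IsBddMeas f → |μ f| ≤ K * (⨆ x, |f x|)

/-- A measurable partition of unity on `X` made of nonnegative functions in `B(X, 𝔄)`
summing to `1`. -/
structure BPartUnity (X : Type*) [MeasurableSpace X] where
  k : ℕ
  g : Fin k → X → ℝ
  meas : ∀ i, Measurable (g i)
  nonneg : ∀ i x, 0 ≤ g i x
  sum_one : ∀ x, ∑ i, g i x = 1

/-- `μ ∈ M_α(X, 𝔄)`: a positive normalized `α`-invariant continuous linear functional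
on `B(X, 𝔄)`. -/
def MemMalphaB {X : Type*} [MeasurableSpace X] (α : X → X) (μ : (X → ℝ) → ℝ) : Prop :=
  IsBFunctional μ ∧ (∀ f : X → ℝ, IsBddMeas f → (∀ x, 0 ≤ f x) → 0 ≤ μ f) ∧
  μ (fun _ => 1) = 1 ∧ ∀ f : X → ℝ, IsBddMeas f → μ (f ∘ α) = μ f

def entTerm (a r : ℝ) : EReal :=
  if a = 0 then 0 else if r = 0 then ⊥ else ((a * Real.log (r / a) : ℝ) : EReal)

def tauNB {X : Type*} [MeasurableSpace X] (m : Measure X) (α : X → X)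
    (μ : (X → ℝ) → ℝ) (n : ℕ) (D : BPartUnity X) : EReal :=
  sSup {r : EReal | ∃ f : X → ℝ, Integrable f m ∧ (∫ x, |f x| ∂m) = 1 ∧
    r = ∑ i, entTerm (μ (D.g i)) (∫ x, D.g i x * |f (α^[n] x)| ∂m)}

def tEntropyB {X : Type*} [MeasurableSpace X] (m : Measure X) (α : X → X)
    (μ : (X → ℝ) → ℝ) : EReal :=
  ⨅ (n : ℕ) (_ : 0 < n) (D : BPartUnity X), (((n : ℝ)⁻¹ : ℝ) : EReal) * tauNB m α μ n D

/-- The t-entropy on the dual of `B(X, 𝔄)`, extended by `-∞` outside `M_α(X, 𝔄)`. -/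
def tEntropyBExt {X : Type*} [MeasurableSpace X] (m : Measure X) (α : X → X)
    (μ : (X → ℝ) → ℝ) : EReal :=
  @ite _ (MemMalphaB α μ) (Classical.dec _) (tEntropyB m α μ) ⊥


theorem es_coe_sum {ι : Type*} (s : Finset ι) (f : ι → ℝ) :
    ((∑ i ∈ s, f i : ℝ) : EReal) = ∑ i ∈ s, (f i : EReal) := by
  classical
  induction s using Finset.induction_on with
  | empty => simp
  | insert a s ha ih => rw [Finset.sum_insert ha, Finset.sum_insert ha, EReal.coe_add, ih]

theorem es_prod_bound {k : ℕ} (a r : Fin k → ℝ) (ha : ∀ i, 0 ≤ a i) (hr : ∀ i, 0 ≤ r i) (t : ℝ)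
    (h : ∑ i, entTerm (a i) (r i) ≤ (t : EReal)) :
    ∏ i, (r i / a i) ^ (a i) ≤ Real.exp t := by
  by_cases hz : ∃ i, a i ≠ 0 ∧ r i = 0
  · obtain ⟨i, h1, h2⟩ := hz
    rw [Finset.prod_eq_zero (Finset.mem_univ i)]
    · exact (Real.exp_pos t).le
    · rw [h2, zero_div, Real.zero_rpow h1]
  · push Not at hz
    have e : ∀ i, entTerm (a i) (r i) = ((a i * Real.log (r i / a i) : ℝ) : EReal) := by
      intro i
      unfold entTerm
      split_ifs with h1 h2
      · simp [h1]
      · exact absurd h2 (hz i h1)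
      · rfl
    have e2 : ∀ i, (r i / a i) ^ (a i) = Real.exp (a i * Real.log (r i / a i)) := by
      intro i
      by_cases h1 : a i = 0
      · simp [h1]
      · have : 0 < r i / a i :=
          div_pos (lt_of_le_of_ne (hr i) (Ne.symm (hz i h1))) (lt_of_le_of_ne (ha i) (Ne.symm h1))
        rw [Real.rpow_def_of_pos this, mul_comm]
    simp_rw [e] at h
    simp_rw [e2]
    rw [← Real.exp_sum, Real.exp_le_exp]
    have : ((∑ i, a i * Real.log (r i / a i) : ℝ) : EReal) ≤ (t : EReal) := by
      rw [es_coe_sum]; exact h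
    exact_mod_cast this

theorem es_findim {k : ℕ} (a : Fin k → ℝ) (ha : ∀ i, 0 ≤ a i) (hsum : ∑ i, a i = 1)
    (K : Set (Fin k → ℝ)) (hconv : Convex ℝ K) (hnn : ∀ r ∈ K, ∀ i, 0 ≤ r i)
    (R : ℝ) (hR : 0 < R) (hbd : ∀ r ∈ K, ∑ i, r i ≤ R) (t' t : ℝ) (htt : t' < t)
    (h : ∀ r ∈ K, ∑ i, entTerm (a i) (r i) ≤ (t' : EReal)) :
    ∃ c : Fin k → ℝ, (∀ i, 0 < c i) ∧ (∀ r ∈ K, ∑ i, c i * r i ≤ 1) ∧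
      -t < ∑ i, a i * Real.log (c i) := by
  rcases K.eq_empty_or_nonempty with rfl | hne
  · refine ⟨fun _ => Real.exp (-t + 1), fun _ => Real.exp_pos _, by simp, ?_⟩
    simp only [Real.log_exp, ← Finset.sum_mul, hsum]
    linarith
  -- closure of K
  have hnnc : ∀ r ∈ closure K, ∀ i, 0 ≤ r i := by
    intro r hr i
    have : closure K ⊆ {r | 0 ≤ r i} :=
      closure_minimal (fun r hr => hnn r hr i)
        (isClosed_le continuous_const (continuous_apply i))
    exact this hr
  have hcomp : IsCompact (closure K) := by
    apply Bornology.IsBounded.isCompact_closure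
    refine (Metric.isBounded_Icc (0 : Fin k → ℝ) (fun _ => R)).subset ?_
    intro r hr
    refine ⟨fun i => hnn r hr i, fun i => ?_⟩
    exact (Finset.single_le_sum (fun j _ => hnn r hr j) (Finset.mem_univ i)).trans (hbd r hr)
  let G : (Fin k → ℝ) → ℝ := fun r => ∏ i, (r i / a i) ^ (a i)
  have hG : Continuous G := by
    apply continuous_finsetProd
    intro i _
    exact (Real.continuous_rpow_const (ha i)).comp ((continuous_apply i).div_const _)
  have hGle : ∀ r ∈ closure K, G r ≤ Real.exp t' := by
    intro r hr
    have : closure K ⊆ {r | G r ≤ Real.exp t'} :=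
      closure_minimal (fun r hr => es_prod_bound a r ha (hnn r hr) t' (h r hr))
        (isClosed_le hG continuous_const)
    exact this hr
  have hev : ∀ᶠ δ in nhds (0 : ℝ), ∀ r ∈ closure K, G (fun i => r i + δ) < Real.exp t := by
    apply hcomp.eventually_forall_of_forall_eventually
    intro r hr
    have hc : Continuous (fun z : ℝ × (Fin k → ℝ) => G (fun i => z.2 i + z.1)) := by
      apply hG.comp
      fun_prop
    apply hc.continuousAt.eventually_lt continuousAt_const
    simp only [add_zero]
    exact (hGle r hr).trans_lt (Real.exp_lt_exp.2 htt)
  obtain ⟨δ, hδ, hδG⟩ : ∃ δ : ℝ, 0 < δ ∧ ∀ r ∈ closure K, G (fun i => r i + δ) < Real.exp t := by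
    obtain ⟨e, he, hh⟩ := Metric.eventually_nhds_iff.1 hev
    refine ⟨e / 2, by positivity, hh ?_⟩
    rw [Real.dist_eq, sub_zero, abs_of_pos (by positivity)]
    linarith
  obtain ⟨q, hq, hmax⟩ := hcomp.exists_isMaxOn hne.closure
    (f := fun r => ∑ i, a i * Real.log (r i + δ)) (by
      apply continuousOn_finsetSum
      intro i _
      apply ContinuousOn.mul continuousOn_const
      apply ContinuousOn.log (by fun_prop)
      intro r hr
      have := hnnc r hr i
      positivity)
  have hqp : ∀ i, 0 < q i + δ := fun i => by have := hnnc q hq i; positivity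
  have hvar : ∀ r ∈ K, ∑ i, a i / (q i + δ) * (r i - q i) ≤ 0 := by
    intro r hr
    let θ : ℝ → ℝ := fun s => ∑ i, a i * Real.log (q i + s * (r i - q i) + δ)
    have hd : HasDerivAt θ (∑ i, a i / (q i + δ) * (r i - q i)) 0 := by
      apply HasDerivAt.fun_sum
      intro i _
      have h1 : HasDerivAt (fun s : ℝ => q i + s * (r i - q i) + δ) (r i - q i) 0 := by
        have := (((hasDerivAt_id (0:ℝ)).mul_const (r i - q i)).const_add (q i)).add_const δ
        simpa using this
      have h2 := (h1.log (by simpa using (hqp i).ne')).const_mul (a i)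
      have e : a i / (q i + δ) * (r i - q i)
          = a i * ((r i - q i) / (q i + 0 * (r i - q i) + δ)) := by
        simp only [zero_mul, add_zero]
        ring
      rw [e]
      exact h2
    have hmx : IsLocalMaxOn θ (Set.Icc 0 1) 0 := by
      apply IsMaxOn.localize
      intro s hs
      have hmem : (fun i => q i + s * (r i - q i)) ∈ closure K := by
        have := hconv.closure.add_smul_sub_mem hq (subset_closure hr) hs
        exact this
      have := hmax hmem
      simpa [θ] using this
    have := hmx.hasFDerivWithinAt_nonpos (y := (1:ℝ)) hd.hasFDerivAt.hasFDerivWithinAt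
      (mem_posTangentConeAt_of_segment_subset (by
        rw [segment_eq_Icc (by norm_num)]; simp))
    simpa using this
  set S : ℝ := ∑ i, a i / (q i + δ) with hS
  have hSnn : ∀ i, 0 ≤ a i / (q i + δ) := fun i => div_nonneg (ha i) (hqp i).le
  have hSpos : 0 < S := by
    apply lt_of_le_of_ne (Finset.sum_nonneg fun i _ => hSnn i)
    intro h0
    have h1 := (Finset.sum_eq_zero_iff_of_nonneg (fun i _ => hSnn i)).1 h0.symm
    have : ∑ i, a i = 0 := by
      apply Finset.sum_eq_zero
      intro i hi
      have := h1 i hi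
      rcases div_eq_zero_iff.1 this with h2 | h2
      · exact h2
      · exact absurd h2 (hqp i).ne'
    linarith
  set κ : ℝ := δ * S / R with hκ
  have hκp : 0 < κ := by positivity
  refine ⟨fun i => a i / (q i + δ) + κ, fun i => by have := hSnn i; positivity, ?_, ?_⟩
  · intro r hr
    have h1 := hvar r hr
    have h2 : ∑ i, (a i / (q i + δ) + κ) * r i
        = ∑ i, a i / (q i + δ) * (r i - q i) + (∑ i, a i - δ * S) + κ * ∑ i, r i := by
      rw [hS, Finset.mul_sum, Finset.mul_sum, ← Finset.sum_sub_distrib, ← Finset.sum_add_distrib,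
        ← Finset.sum_add_distrib]
      apply Finset.sum_congr rfl
      intro i _
      have := (hqp i).ne'
      field_simp
      ring
    have h3 : κ * ∑ i, r i ≤ δ * S := by
      calc κ * ∑ i, r i ≤ κ * R := mul_le_mul_of_nonneg_left (hbd r hr) hκp.le
        _ = δ * S := by rw [hκ]; field_simp
    rw [h2, hsum]
    linarith
  · have h1 : G (fun i => q i + δ) = Real.exp (∑ i, a i * Real.log ((q i + δ) / a i)) := by
      rw [Real.exp_sum]
      apply Finset.prod_congr rfl
      intro i _
      by_cases h1 : a i = 0
      · simp [h1]
      · have : 0 < (q i + δ) / a i :=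
          div_pos (hqp i) (lt_of_le_of_ne (ha i) (Ne.symm h1))
        rw [Real.rpow_def_of_pos this, mul_comm]
    have h2 := hδG q hq
    rw [h1, Real.exp_lt_exp] at h2
    have h3 : - ∑ i, a i * Real.log ((q i + δ) / a i)
        ≤ ∑ i, a i * Real.log (a i / (q i + δ) + κ) := by
      rw [← Finset.sum_neg_distrib]
      apply Finset.sum_le_sum
      intro i _
      by_cases h1 : a i = 0
      · simp [h1]
      · have hai : 0 < a i := lt_of_le_of_ne (ha i) (Ne.symm h1)
        rw [← mul_neg, ← Real.log_inv, inv_div]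
        apply mul_le_mul_of_nonneg_left _ hai.le
        apply Real.log_le_log (div_pos hai (hqp i))
        linarith
    linarith

section ES
variable {X : Type*} [MeasurableSpace X] {m : Measure X} {α : X → X}

/-- Real form of shift boundedness. -/
def ESBound (m : Measure X) (α : X → X) (C : ℝ) : Prop :=
  1 ≤ C ∧ ∀ n : ℕ, ∀ f : X → ℝ, Integrable f m →
    Integrable (fun x => f (α^[n] x)) m ∧ ∫ x, |f (α^[n] x)| ∂m ≤ C ^ n * ∫ x, |f x| ∂m

theorem es_bound (hα : Measurable α) (hbdd : ShiftBounded m α) : ∃ C, ESBound m α C := by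
  obtain ⟨C₀, -, hC₀⟩ := hbdd
  set C : ℝ≥0 := max C₀ 1 with hC
  have hle : Measure.map α m ≤ C • m := by
    refine Measure.le_iff.2 fun s hs => ?_
    rw [Measure.map_apply hα hs]
    refine (hC₀ s hs).trans ?_
    rw [Measure.smul_apply, ENNReal.smul_def, smul_eq_mul]
    gcongr
    exact le_max_left _ _
  have hone : ∀ f : X → ℝ, Integrable f m →
      Integrable (fun x => f (α x)) m ∧ ∫ x, |f (α x)| ∂m ≤ C * ∫ x, |f x| ∂m := by
    intro f hf
    have h1 : Integrable f (C • m) := hf.smul_measure_nnreal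
    have h2 : Integrable f (Measure.map α m) := h1.mono_measure hle
    refine ⟨h2.comp_measurable hα, ?_⟩
    have h3 : ∫ x, |f (α x)| ∂m = ∫ x, |f x| ∂(Measure.map α m) :=
      (integral_map hα.aemeasurable h2.abs.aestronglyMeasurable).symm
    rw [h3]
    refine (integral_mono_measure hle (Eventually.of_forall fun x => abs_nonneg _) h1.abs).trans ?_
    rw [integral_smul_nnreal_measure]
    exact le_rfl
  refine ⟨C, by exact_mod_cast le_max_right _ _, fun n => ?_⟩
  induction n with
  | zero => intro f hf; simpa using hf
  | succ n ih =>
    intro f hf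
    have h1 := ih f hf
    have h2 := hone _ h1.1
    simp only [Function.iterate_succ_apply]
    refine ⟨h2.1, h2.2.trans ?_⟩
    rw [pow_succ', mul_assoc]
    exact mul_le_mul_of_nonneg_left h1.2 C.coe_nonneg

theorem es_bdd_mul {h f : X → ℝ} (hh : IsBddMeas h) (hf : Integrable f m) :
    Integrable (fun x => h x * f x) m := by
  obtain ⟨h1, b, hb⟩ := hh
  exact hf.bdd_mul h1.aestronglyMeasurable (Eventually.of_forall fun x => by simpa using hb x)

theorem es_exp_bdd {ψ : X → ℝ} (hψ : IsBddMeas ψ) : IsBddMeas (fun x => Real.exp (ψ x)) := by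
  obtain ⟨h1, b, hb⟩ := hψ
  refine ⟨h1.exp, Real.exp b, fun x => ?_⟩
  rw [Real.abs_exp, Real.exp_le_exp]
  exact (le_abs_self _).trans (hb x)

theorem es_sum_bdd (hα : Measurable α) {ψ : X → ℝ} (hψ : IsBddMeas ψ) (s : Finset ℕ) (e : ℕ → ℕ) :
    IsBddMeas (fun x => ∑ i ∈ s, ψ (α^[e i] x)) := by
  obtain ⟨h1, b, hb⟩ := hψ
  refine ⟨Finset.measurable_fun_sum _ fun i _ => h1.comp (hα.iterate _), ∑ i ∈ s, b, fun x => ?_⟩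
  exact (Finset.abs_sum_le_sum_abs _ _).trans (Finset.sum_le_sum fun i _ => hb _)

/-- Iterating a contraction estimate. -/
theorem es_iter (hα : Measurable α) {C : ℝ} (hC : ESBound m α C) {ψ : X → ℝ} (hψ : IsBddMeas ψ)
    (N : ℕ) (hN : ∀ f : X → ℝ, Integrable f m →
      ∫ x, Real.exp (ψ x) * |f (α^[N] x)| ∂m ≤ ∫ x, |f x| ∂m) (p : ℕ) :
    ∀ f : X → ℝ, Integrable f m →
      ∫ x, Real.exp (∑ i ∈ Finset.range p, ψ (α^[N * i] x)) * |f (α^[N * p] x)| ∂m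
        ≤ ∫ x, |f x| ∂m := by
  induction p with
  | zero => intro f hf; simp
  | succ p ih =>
    intro f hf
    set F : X → ℝ := fun x =>
      Real.exp (∑ i ∈ Finset.range p, ψ (α^[N * i] x)) * |f (α^[N * p] x)| with hF
    have hFi : Integrable F m :=
      es_bdd_mul (es_exp_bdd (es_sum_bdd hα hψ _ _)) (hC.2 _ f hf).1.abs
    have hFa : ∀ x, |F x| = F x := fun x => abs_of_nonneg (by positivity)
    have h1 := hN F hFi
    simp only [hFa] at h1
    refine le_trans (le_of_eq ?_) (h1.trans (ih f hf))
    congr 1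
    ext x
    simp only [hF]
    rw [Finset.sum_range_succ', ← mul_assoc, ← Real.exp_add]
    simp only [← Function.iterate_add_apply, mul_add, mul_one, mul_zero, Function.iterate_zero, id]
    rw [add_comm (ψ x)]

theorem es_shifted (hα : Measurable α) {C : ℝ} (hC : ESBound m α C) {ψ : X → ℝ} (hψ : IsBddMeas ψ)
    (N : ℕ) (hN : ∀ f : X → ℝ, Integrable f m →
      ∫ x, Real.exp (ψ x) * |f (α^[N] x)| ∂m ≤ ∫ x, |f x| ∂m) (p j l : ℕ)
    (f : X → ℝ) (hf : Integrable f m) :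
    Integrable (fun x => Real.exp (∑ i ∈ Finset.range p, ψ (α^[N * i + j] x)) *
      |f (α^[l + (N * p + j)] x)|) m ∧
    ∫ x, Real.exp (∑ i ∈ Finset.range p, ψ (α^[N * i + j] x)) * |f (α^[l + (N * p + j)] x)| ∂m
        ≤ C ^ (j + l) * ∫ x, |f x| ∂m := by
  have h0 := hC.2 l f hf
  set F : X → ℝ := fun x =>
      Real.exp (∑ i ∈ Finset.range p, ψ (α^[N * i] x)) * |f (α^[l] (α^[N * p] x))| with hF
  have hFi : Integrable F m :=
    es_bdd_mul (es_exp_bdd (es_sum_bdd hα hψ _ _)) (hC.2 _ _ h0.1).1.abs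
  have hFa : ∀ x, |F x| = F x := fun x => abs_of_nonneg (by positivity)
  have h1 := es_iter hα hC hψ N hN p _ h0.1
  have h2 := hC.2 j F hFi
  simp only [hFa] at h2
  have e : (fun x => Real.exp (∑ i ∈ Finset.range p, ψ (α^[N * i + j] x)) *
      |f (α^[l + (N * p + j)] x)|) = fun x => F (α^[j] x) := by
    ext x
    simp only [hF, Function.iterate_add_apply]
  rw [e]
  refine ⟨h2.1, h2.2.trans ?_⟩
  rw [pow_add, mul_assoc]
  have := hC.1
  apply mul_le_mul_of_nonneg_left _ (by positivity)
  exact h1.trans h0.2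

theorem es_sum_blocks (u : ℕ → ℝ) (N p : ℕ) :
    ∑ i ∈ Finset.range (N * p), u i =
      ∑ j ∈ Finset.range N, ∑ i ∈ Finset.range p, u (N * i + j) := by
  rw [Finset.sum_comm]
  induction p with
  | zero => simp
  | succ p ih => rw [mul_add, mul_one, Finset.sum_range_add, ih, Finset.sum_range_succ]

theorem es_pigeon (u : ℕ → ℝ) (b : ℝ) (hb : ∀ i, |u i| ≤ b) (N p n : ℕ) (hN : 0 < N)
    (h1 : N * p ≤ n) (h2 : n ≤ N * p + 2 * N) :
    ∃ j < N, (∑ i ∈ Finset.range n, u i) / N ≤ 2 * b + ∑ i ∈ Finset.range p, u (N * i + j) := by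
  obtain ⟨d, rfl⟩ := Nat.exists_eq_add_of_le h1
  have hb0 : 0 ≤ b := (abs_nonneg _).trans (hb 0)
  have hNp : (0:ℝ) < N := by exact_mod_cast hN
  have hs : ∑ i ∈ Finset.range (N * p + d), u i ≤
      2 * N * b + ∑ j ∈ Finset.range N, ∑ i ∈ Finset.range p, u (N * i + j) := by
    rw [Finset.sum_range_add, es_sum_blocks, add_comm]
    gcongr
    calc ∑ x ∈ Finset.range d, u (N * p + x) ≤ ∑ x ∈ Finset.range d, b :=
          Finset.sum_le_sum fun i _ => (le_abs_self _).trans (hb _)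
      _ = d * b := by simp
      _ ≤ 2 * N * b := by
        gcongr
        have : d ≤ 2 * N := by omega
        exact_mod_cast this
  have := Finset.exists_le_of_sum_le (s := Finset.range N)
    (f := fun _ => (∑ i ∈ Finset.range (N * p + d), u i) / N)
    (g := fun j => 2 * b + ∑ i ∈ Finset.range p, u (N * i + j))
    (Finset.nonempty_range_iff.2 hN.ne') (by
      rw [Finset.sum_const, Finset.sum_add_distrib, Finset.sum_const, Finset.card_range,
        nsmul_eq_mul, nsmul_eq_mul, mul_div_cancel₀ _ hNp.ne']
      linarith)
  obtain ⟨j, hj, h⟩ := this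
  exact ⟨j, Finset.mem_range.1 hj, h⟩

/-- The estimate from a contraction weight. -/
theorem es_core (hα : Measurable α) {C : ℝ} (hC : ESBound m α C) {ψ : X → ℝ} (hψ : IsBddMeas ψ)
    (N : ℕ) (hNp : 0 < N) (hN : ∀ f : X → ℝ, Integrable f m →
      ∫ x, Real.exp (ψ x) * |f (α^[N] x)| ∂m ≤ ∫ x, |f x| ∂m) (t a : ℝ) :
    ∃ K : ℝ, 0 < K ∧ ∀ n : ℕ, 0 < n → ∀ f : X → ℝ, Integrable f m →
      ∫ x in {x | |birkhoff α ψ n x / (n : ℝ) - a| < N * t + a}, |f (α^[n] x)| ∂m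
        ≤ K * Real.exp (n * t) * ∫ x, |f x| ∂m := by
  obtain ⟨b, hb⟩ := hψ.2
  have hC1 := hC.1
  have hC0 : 0 < C := by linarith
  have hNR : (0:ℝ) < N := by exact_mod_cast hNp
  set K1 : ℝ := C ^ N * Real.exp (N * |t|) with hK1
  set K2 : ℝ := Real.exp (2 * b) * (N * C ^ (3 * N)) with hK2
  refine ⟨K1 + K2, by positivity, fun n hn f hf => ?_⟩
  have hI : 0 ≤ ∫ x, |f x| ∂m := integral_nonneg fun x => abs_nonneg _
  have hfn := hC.2 n f hf
  rcases lt_or_ge n N with hnN | hnN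
  · calc ∫ x in {x | |birkhoff α ψ n x / (n : ℝ) - a| < N * t + a}, |f (α^[n] x)| ∂m
        ≤ ∫ x, |f (α^[n] x)| ∂m :=
          setIntegral_le_integral hfn.1.abs (Eventually.of_forall fun x => abs_nonneg _)
      _ ≤ C ^ n * ∫ x, |f x| ∂m := hfn.2
      _ ≤ (K1 + K2) * Real.exp (n * t) * ∫ x, |f x| ∂m := by
        apply mul_le_mul_of_nonneg_right _ hI
        have h1 : C ^ n ≤ C ^ N := pow_le_pow_right₀ hC1 hnN.le
        have h2 : 1 ≤ Real.exp (N * |t|) * Real.exp (n * t) := by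
          rw [← Real.exp_add]
          apply Real.one_le_exp
          have h3 : (n:ℝ) ≤ N := by exact_mod_cast hnN.le
          have h4 : (n:ℝ) * |t| ≤ N * |t| := mul_le_mul_of_nonneg_right h3 (abs_nonneg _)
          have h5 : (n:ℝ) * (-|t|) ≤ n * t :=
            mul_le_mul_of_nonneg_left (neg_abs_le t) (Nat.cast_nonneg _)
          linarith
        have h3 : C ^ N ≤ K1 * Real.exp (n * t) := by
          rw [hK1, mul_assoc]
          exact le_mul_of_one_le_right (by positivity) h2
        have h4 : 0 ≤ K2 * Real.exp (n * t) := by positivity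
        linarith
  · obtain ⟨d, rfl⟩ := Nat.exists_eq_add_of_le hnN
    set p := d / N with hp
    have hp1 : N * p ≤ d := Nat.mul_div_le d N
    have hp2 : d < N * p + N := by
      have := Nat.lt_mul_div_succ d hNp
      rw [mul_add, mul_one] at this
      exact this
    set n := N + d with hnd
    let E : ℕ → X → ℝ := fun j x => Real.exp (∑ i ∈ Finset.range p, ψ (α^[N * i + j] x)) *
      |f (α^[n] x)|
    have hE : ∀ j ∈ Finset.range N, Integrable (E j) m ∧
        ∫ x, E j x ∂m ≤ C ^ (3 * N) * ∫ x, |f x| ∂m := by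
      intro j hj
      have hj := Finset.mem_range.1 hj
      have h := es_shifted hα hC hψ N hN p j (n - (N * p + j)) f hf
      rw [Nat.sub_add_cancel (by omega)] at h
      refine ⟨h.1, h.2.trans ?_⟩
      apply mul_le_mul_of_nonneg_right _ hI
      exact pow_le_pow_right₀ hC1 (by omega)
    have hgi : Integrable (fun x => Real.exp (2 * b + n * t) * ∑ j ∈ Finset.range N, E j x) m :=
      (integrable_finsetSum _ fun j hj => (hE j hj).1).const_mul _
    have hnR : (0:ℝ) < n := by exact_mod_cast hn
    have hE0 : ∀ j x, 0 ≤ E j x := fun j x => by positivity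
    have hms : MeasurableSet {x | |birkhoff α ψ n x / (n : ℝ) - a| < N * t + a} := by
      apply measurableSet_lt _ measurable_const
      have := (es_sum_bdd hα hψ (Finset.range n) id).1
      exact ((this.div_const _).sub_const _).abs
    have hpt : ∀ x ∈ {x | |birkhoff α ψ n x / (n : ℝ) - a| < N * t + a},
        |f (α^[n] x)| ≤ Real.exp (2 * b + n * t) * ∑ j ∈ Finset.range N, E j x := by
      intro x hx
      have hx1 : -(N * t + a) < birkhoff α ψ n x / (n : ℝ) - a := (abs_lt.1 hx).1
      obtain ⟨j, hj, hjj⟩ := es_pigeon (fun i => ψ (α^[i] x)) b (fun i => hb _) N p n hNp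
        (by omega) (by omega)
      have h1 : -(n * t) ≤ (∑ i ∈ Finset.range n, ψ (α^[i] x)) / N := by
        rw [le_div_iff₀ hNR]
        have : -(N * t) < birkhoff α ψ n x / (n : ℝ) := by linarith
        rw [lt_div_iff₀ hnR] at this
        unfold birkhoff at this
        linarith
      have h2 : 1 ≤ Real.exp (2 * b + n * t) *
          Real.exp (∑ i ∈ Finset.range p, ψ (α^[N * i + j] x)) := by
        rw [← Real.exp_add]
        apply Real.one_le_exp
        linarith
      calc |f (α^[n] x)| ≤ (Real.exp (2 * b + n * t) *
          Real.exp (∑ i ∈ Finset.range p, ψ (α^[N * i + j] x))) * |f (α^[n] x)| :=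
            le_mul_of_one_le_left (abs_nonneg _) h2
        _ = Real.exp (2 * b + n * t) * E j x := by simp only [E]; ring
        _ ≤ _ := by
          apply mul_le_mul_of_nonneg_left _ (Real.exp_pos _).le
          exact Finset.single_le_sum (f := fun j => E j x) (fun j _ => hE0 j x)
            (Finset.mem_range.2 hj)
    calc ∫ x in {x | |birkhoff α ψ n x / (n : ℝ) - a| < N * t + a}, |f (α^[n] x)| ∂m
        ≤ ∫ x in {x | |birkhoff α ψ n x / (n : ℝ) - a| < N * t + a},
            Real.exp (2 * b + n * t) * ∑ j ∈ Finset.range N, E j x ∂m :=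
          setIntegral_mono_on hfn.1.abs.integrableOn hgi.integrableOn hms hpt
      _ ≤ ∫ x, Real.exp (2 * b + n * t) * ∑ j ∈ Finset.range N, E j x ∂m :=
          setIntegral_le_integral hgi (Eventually.of_forall fun x =>
            mul_nonneg (Real.exp_pos _).le (Finset.sum_nonneg fun j _ => hE0 j x))
      _ = Real.exp (2 * b + n * t) * ∑ j ∈ Finset.range N, ∫ x, E j x ∂m := by
          rw [integral_const_mul, integral_finsetSum _ fun j hj => (hE j hj).1]
      _ ≤ Real.exp (2 * b + n * t) * ∑ j ∈ Finset.range N, (C ^ (3 * N) * ∫ x, |f x| ∂m) := by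
          gcongr with j hj
          exact (hE j hj).2
      _ = K2 * Real.exp (n * t) * ∫ x, |f x| ∂m := by
          rw [Finset.sum_const, Finset.card_range, nsmul_eq_mul, Real.exp_add, hK2]
          ring
      _ ≤ (K1 + K2) * Real.exp (n * t) * ∫ x, |f x| ∂m := by
          apply mul_le_mul_of_nonneg_right _ hI
          apply mul_le_mul_of_nonneg_right _ (Real.exp_pos _).le
          have : 0 ≤ K1 := by positivity
          linarith

end ES

section ES2
variable {X : Type*} [MeasurableSpace X] {m : Measure X} {α : X → X}

theorem es_part_le (D : BPartUnity X) (i : Fin D.k) (x : X) : D.g i x ≤ 1 := by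
  rw [← D.sum_one x]
  exact Finset.single_le_sum (f := fun i => D.g i x) (fun j _ => D.nonneg j x) (Finset.mem_univ i)

theorem es_part_bdd (D : BPartUnity X) (i : Fin D.k) : IsBddMeas (D.g i) :=
  ⟨D.meas i, 1, fun x => by rw [abs_of_nonneg (D.nonneg i x)]; exact es_part_le D i x⟩

theorem es_lin_bdd (D : BPartUnity X) (c : Fin D.k → ℝ) (s : Finset (Fin D.k)) :
    IsBddMeas (fun x => ∑ i ∈ s, c i * D.g i x) := by
  refine ⟨Finset.measurable_fun_sum _ fun i _ => (D.meas i).const_mul _, ∑ i ∈ s, |c i|, fun x => ?_⟩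
  refine (Finset.abs_sum_le_sum_abs _ _).trans (Finset.sum_le_sum fun i _ => ?_)
  rw [abs_mul, abs_of_nonneg (D.nonneg i x)]
  exact mul_le_of_le_one_right (abs_nonneg _) (es_part_le D i x)

theorem es_lin {μ : (X → ℝ) → ℝ} (hμ : IsBFunctional μ) (D : BPartUnity X) (c : Fin D.k → ℝ)
    (s : Finset (Fin D.k)) :
    μ (fun x => ∑ i ∈ s, c i * D.g i x) = ∑ i ∈ s, c i * μ (D.g i) := by
  classical
  induction s using Finset.induction_on with
  | empty =>
    have h := hμ.2.1 0 (fun _ => 0) ⟨measurable_const, 0, by simp⟩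
    have e : (0:ℝ) • (fun _ : X => (0:ℝ)) = fun _ => 0 := by ext; simp
    rw [e, zero_mul] at h
    simpa using h
  | insert a s ha ih =>
    have hb : IsBddMeas (c a • D.g a) := by
      have := es_lin_bdd D c {a}
      simp only [Finset.sum_singleton] at this
      exact this
    have e : (fun x => ∑ i ∈ insert a s, c i * D.g i x)
        = c a • D.g a + fun x => ∑ i ∈ s, c i * D.g i x := by
      ext x
      simp [Finset.sum_insert ha]
    rw [e, hμ.1 _ _ hb (es_lin_bdd D c s), hμ.2.1 _ _ (es_part_bdd D a), ih,
      Finset.sum_insert ha]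

theorem es_mono {μ : (X → ℝ) → ℝ} (hμ : MemMalphaB α μ) {f g : X → ℝ} (hf : IsBddMeas f)
    (hg : IsBddMeas g) (h : ∀ x, f x ≤ g x) : μ f ≤ μ g := by
  have hb : IsBddMeas (fun x => g x - f x) := by
    obtain ⟨h1, a, ha⟩ := hf
    obtain ⟨h2, b, hb⟩ := hg
    exact ⟨h2.sub h1, b + a, fun x => (abs_sub _ _).trans (add_le_add (hb x) (ha x))⟩
  have h1 := hμ.2.1 _ hb (fun x => sub_nonneg.2 (h x))
  have h2 := hμ.1.1 f _ hf hb
  have e : f + (fun x => g x - f x) = g := by ext; simp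
  rw [e] at h2
  linarith

theorem es_weight {C : ℝ} (hC : ESBound m α C) {μ : (X → ℝ) → ℝ}
    (hμ : MemMalphaB α μ) (N : ℕ) (D : BPartUnity X) (T : ℝ)
    (hT : tauNB m α μ N D < (T : EReal)) :
    ∃ ψ : X → ℝ, IsBddMeas ψ ∧ (∀ f : X → ℝ, Integrable f m →
      ∫ x, Real.exp (ψ x) * |f (α^[N] x)| ∂m ≤ ∫ x, |f x| ∂m) ∧ -T < μ ψ := by
  obtain ⟨T', hT1, hT2⟩ := EReal.lt_iff_exists_real_btwn.1 hT
  have hT2 : T' < T := by exact_mod_cast hT2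
  have hCp : 0 < C := by have := hC.1; linarith
  set K : Set (Fin D.k → ℝ) := {r | ∃ f : X → ℝ, Integrable f m ∧ (∫ x, |f x| ∂m) = 1 ∧
    r = fun i => ∫ x, D.g i x * |f (α^[N] x)| ∂m} with hK
  have hgi : ∀ i, ∀ f : X → ℝ, Integrable f m →
      Integrable (fun x => D.g i x * |f (α^[N] x)|) m := fun i f hf =>
    es_bdd_mul (es_part_bdd D i) (hC.2 N f hf).1.abs
  have hsum : ∑ i, μ (D.g i) = 1 := by
    have h := es_lin hμ.1 D (fun _ => 1) Finset.univ
    simp only [one_mul, D.sum_one] at h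
    rw [← h]
    exact hμ.2.2.1
  have hconv : Convex ℝ K := by
    rintro _ ⟨f₁, h1, h1', rfl⟩ _ ⟨f₂, h2, h2', rfl⟩ a b ha hb hab
    have habs : ∀ y, |(a * |f₁ y| + b * |f₂ y|)| = a * |f₁ y| + b * |f₂ y| := fun y =>
      abs_of_nonneg (by positivity)
    refine ⟨fun x => a * |f₁ x| + b * |f₂ x|, (h1.abs.const_mul a).add (h2.abs.const_mul b), ?_, ?_⟩
    · simp only [habs]
      rw [integral_add (h1.abs.const_mul a) (h2.abs.const_mul b), integral_const_mul,
        integral_const_mul, h1', h2']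
      linarith
    · ext i
      simp only [habs, Pi.add_apply, Pi.smul_apply, smul_eq_mul]
      rw [← integral_const_mul, ← integral_const_mul,
        ← integral_add ((hgi i _ h1).const_mul a) ((hgi i _ h2).const_mul b)]
      congr 1
      ext x
      ring
  have hsumint : ∀ c : Fin D.k → ℝ, ∀ f : X → ℝ, Integrable f m →
      ∑ i, c i * ∫ x, D.g i x * |f (α^[N] x)| ∂m
        = ∫ x, (∑ i, c i * D.g i x) * |f (α^[N] x)| ∂m := by
    intro c f hf
    simp_rw [← integral_const_mul]
    rw [← integral_finsetSum _ fun i _ => (hgi i f hf).const_mul _]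
    congr 1
    ext x
    rw [Finset.sum_mul]
    exact Finset.sum_congr rfl fun i _ => by ring
  obtain ⟨c, hc, hcK, hcT⟩ := es_findim (fun i => μ (D.g i))
    (fun i => hμ.2.1 _ (es_part_bdd D i) (D.nonneg i)) hsum K hconv
    (by
      rintro _ ⟨f, h1, h1', rfl⟩ i
      exact integral_nonneg fun x => mul_nonneg (D.nonneg i x) (abs_nonneg _))
    (C ^ N) (by positivity)
    (by
      rintro _ ⟨f, h1, h1', rfl⟩
      have := hsumint (fun _ => 1) f h1
      simp only [one_mul, D.sum_one] at this
      rw [this]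
      have h2 := (hC.2 N f h1).2
      rwa [h1', mul_one] at h2)
    T' T hT2
    (by
      rintro _ ⟨f, h1, h1', rfl⟩
      refine le_trans ?_ hT1.le
      exact le_sSup ⟨f, h1, h1', rfl⟩)
  have hJ : ∀ x, ∑ i, Real.log (c i) * D.g i x ≤ Real.log (∑ i, c i * D.g i x) := by
    intro x
    have := strictConcaveOn_log_Ioi.concaveOn.le_map_sum (t := Finset.univ)
      (w := fun i => D.g i x) (p := c) (fun i _ => D.nonneg i x) (D.sum_one x) (fun i _ => hc i)
    simpa [mul_comm] using this
  have hpos : ∀ x, 0 < ∑ i, c i * D.g i x := by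
    intro x
    apply lt_of_le_of_ne (Finset.sum_nonneg fun i _ => mul_nonneg (hc i).le (D.nonneg i x))
    intro h0
    have h1 := (Finset.sum_eq_zero_iff_of_nonneg
      (fun i _ => mul_nonneg (hc i).le (D.nonneg i x))).1 h0.symm
    have h2 : ∑ i, D.g i x = 0 := Finset.sum_eq_zero fun i hi =>
      (mul_eq_zero.1 (h1 i hi)).resolve_left (hc i).ne'
    rw [D.sum_one] at h2
    exact one_ne_zero h2
  have hψ : IsBddMeas (fun x => Real.log (∑ i, c i * D.g i x)) := by
    obtain ⟨h1, b, hb⟩ := es_lin_bdd D c Finset.univ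
    obtain ⟨-, b', hb'⟩ := es_lin_bdd D (fun i => Real.log (c i)) Finset.univ
    refine ⟨h1.log, max b b', fun x => abs_le.2 ⟨?_, ?_⟩⟩
    · have := (abs_le.1 (hb' x)).1
      have h3 := le_max_right b b'
      have := hJ x
      linarith
    · refine (Real.log_le_self (hpos x).le).trans ?_
      exact (le_abs_self _).trans ((hb x).trans (le_max_left _ _))
  refine ⟨_, hψ, ?_, ?_⟩
  · simp only [Real.exp_log (hpos _)]
    have hone : ∀ f : X → ℝ, Integrable f m → ∫ x, |f x| ∂m = 1 →
        ∫ x, (∑ i, c i * D.g i x) * |f (α^[N] x)| ∂m ≤ 1 := by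
      intro f h1 h2
      rw [← hsumint c f h1]
      exact hcK _ ⟨f, h1, h2, rfl⟩
    intro f hf
    rcases (integral_nonneg (fun x => abs_nonneg (f x)) : 0 ≤ ∫ x, |f x| ∂m).eq_or_lt with h0 | h0
    · have h1 := (hC.2 N f hf).2
      rw [← h0, mul_zero] at h1
      have h2 := (integral_eq_zero_iff_of_nonneg (fun x => abs_nonneg _)
        (hC.2 N f hf).1.abs).1 (le_antisymm h1 (integral_nonneg fun x => abs_nonneg _))
      rw [← h0]
      apply le_of_eq
      apply integral_eq_zero_of_ae
      filter_upwards [h2] with x hx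
      simp only [Pi.zero_apply] at hx
      simp [hx]
    · set I := ∫ x, |f x| ∂m with hI
      have hab : ∀ y, |I⁻¹ * f y| = I⁻¹ * |f y| := fun y => by
        rw [abs_mul, abs_of_pos (inv_pos.2 h0)]
      have h1 := hone (fun x => I⁻¹ * f x) (hf.const_mul _) (by
        simp only [hab]
        rw [integral_const_mul, ← hI, inv_mul_cancel₀ h0.ne'])
      simp only [hab] at h1
      have e : ∀ x, (∑ i, c i * D.g i x) * (I⁻¹ * |f (α^[N] x)|)
          = I⁻¹ * ((∑ i, c i * D.g i x) * |f (α^[N] x)|) := fun x => by ring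
      simp only [e] at h1
      rw [integral_const_mul, inv_mul_le_iff₀ h0, mul_one] at h1
      exact h1
  · refine hcT.trans_le ?_
    have h1 := es_mono hμ (es_lin_bdd D (fun i => Real.log (c i)) Finset.univ) hψ hJ
    rw [es_lin hμ.1] at h1
    simpa [mul_comm] using h1

theorem es_entropy_lt_top {C : ℝ} (hC : ESBound m α C) {μ : (X → ℝ) → ℝ}
    (hμ : MemMalphaB α μ) : tEntropyB m α μ < ⊤ := by
  let D : BPartUnity X := ⟨1, fun _ _ => 1, fun _ => measurable_const, fun _ _ => zero_le_one,
    fun x => by simp⟩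
  have h1 : tEntropyB m α μ ≤ (((((1:ℕ):ℝ))⁻¹ : ℝ) : EReal) * tauNB m α μ 1 D :=
    iInf_le_of_le 1 (iInf_le_of_le one_pos (iInf_le _ D))
  have h2 : tauNB m α μ 1 D ≤ ((Real.log C : ℝ) : EReal) := by
    apply sSup_le
    rintro _ ⟨f, hf, hf1, rfl⟩
    have hle := (hC.2 1 f hf).2
    rw [hf1, pow_one, mul_one] at hle
    have hs : ∀ i, entTerm (μ (D.g i)) (∫ x, D.g i x * |f (α^[1] x)| ∂m)
        ≤ ((Real.log C : ℝ) : EReal) := by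
      intro i
      have e1 : μ (D.g i) = 1 := hμ.2.2.1
      have e2 : ∀ x, D.g i x = 1 := fun x => rfl
      rw [e1]
      simp only [e2, one_mul]
      unfold entTerm
      split_ifs with h3 h4
      · norm_num at h3
      · exact bot_le
      · rw [EReal.coe_le_coe_iff, one_mul, div_one]
        apply Real.log_le_log _ hle
        exact lt_of_le_of_ne (integral_nonneg fun x => abs_nonneg _) (Ne.symm h4)
    calc _ = entTerm (μ (D.g (0 : Fin 1))) (∫ x, D.g (0 : Fin 1) x * |f (α^[1] x)| ∂m) :=
          Fin.sum_univ_one _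
      _ ≤ _ := hs _
  refine (h1.trans ?_).trans_lt (EReal.coe_lt_top (Real.log C))
  simpa using h2

theorem es_invariant_case (hα : Measurable α) {C : ℝ} (hC : ESBound m α C) {μ : (X → ℝ) → ℝ}
    (hμ : MemMalphaB α μ) (t : ℝ) (ht : tEntropyB m α μ < (t : EReal)) :
    ∃ (ψ : X → ℝ) (_ : IsBddMeas ψ) (η : ℝ) (_ : 0 < η) (K : ℝ) (_ : 0 < K),
      ∀ n : ℕ, 0 < n → ∀ f : X → ℝ, Integrable f m →
      ∫ x in {x | |birkhoff α ψ n x / (n : ℝ) - μ ψ| < η}, |f (α^[n] x)| ∂m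
        ≤ K * Real.exp (n * t) * ∫ x, |f x| ∂m := by
  unfold tEntropyB at ht
  simp only [iInf_lt_iff] at ht
  obtain ⟨N, hN, D, h⟩ := ht
  have hNR : (0:ℝ) < N := by exact_mod_cast hN
  have hT : tauNB m α μ N D < ((N * t : ℝ) : EReal) := by
    by_contra hcon
    push Not at hcon
    apply absurd h
    push Not
    have h0 : (0:EReal) ≤ (((N:ℝ)⁻¹ : ℝ) : EReal) := by
      exact_mod_cast (inv_pos.2 hNR).le
    have h1 := mul_le_mul_of_nonneg_left hcon h0
    rw [← EReal.coe_mul, inv_mul_cancel_left₀ hNR.ne'] at h1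
    exact h1
  obtain ⟨ψ, hψ, hcon, hlt⟩ := es_weight hC hμ N D _ hT
  obtain ⟨K, hK, hKK⟩ := es_core hα hC hψ N hN hcon t (μ ψ)
  exact ⟨ψ, hψ, N * t + μ ψ, by linarith, K, hK, hKK⟩

theorem es_noninvariant_case {C : ℝ} (hC : ESBound m α C) (hα : Measurable α) {μ : (X → ℝ) → ℝ}
    (hμ : IsBFunctional μ) (hn : ¬ MemMalphaB α μ) (t : ℝ) :
    ∃ (k : ℕ) (φs : Fin k → X → ℝ) (_ : ∀ i, IsBddMeas (φs i)) (η : ℝ) (_ : 0 < η)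
      (K : ℝ) (_ : 0 < K), ∀ n : ℕ, 0 < n → ∀ f : X → ℝ, Integrable f m →
      ∫ x in {x | ∀ i, |birkhoff α (φs i) n x / (n : ℝ) - μ (φs i)| < η}, |f (α^[n] x)| ∂m
        ≤ K * Real.exp (n * t) * ∫ x, |f x| ∂m := by
  -- it suffices that the sets are empty for large `n`
  suffices H : ∃ (k : ℕ) (φs : Fin k → X → ℝ) (_ : ∀ i, IsBddMeas (φs i)) (η : ℝ) (_ : 0 < η)
      (N : ℕ), ∀ n : ℕ, N < n → ∀ x,
        ¬ ∀ i, |birkhoff α (φs i) n x / (n : ℝ) - μ (φs i)| < η by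
    obtain ⟨k, φs, hφ, η, hη, N, hNN⟩ := H
    have hC1 := hC.1
    have hC0 : 0 < C := by linarith
    refine ⟨k, φs, hφ, η, hη, C ^ N * Real.exp (N * |t|), by positivity, fun n hn f hf => ?_⟩
    have hI : 0 ≤ ∫ x, |f x| ∂m := integral_nonneg fun x => abs_nonneg _
    have hfn := hC.2 n f hf
    rcases lt_or_ge N n with hnN | hnN
    · have e : {x | ∀ i, |birkhoff α (φs i) n x / (n : ℝ) - μ (φs i)| < η} = ∅ :=
        Set.eq_empty_iff_forall_notMem.2 (hNN n hnN)
      rw [e]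
      simp only [Measure.restrict_empty, integral_zero_measure]
      positivity
    · refine (setIntegral_le_integral hfn.1.abs
        (Eventually.of_forall fun x => abs_nonneg _)).trans (hfn.2.trans ?_)
      apply mul_le_mul_of_nonneg_right _ hI
      have h1 : C ^ n ≤ C ^ N := pow_le_pow_right₀ hC1 hnN
      have h2 : 1 ≤ Real.exp (N * |t|) * Real.exp (n * t) := by
        rw [← Real.exp_add]
        apply Real.one_le_exp
        have h3 : (n:ℝ) ≤ N := by exact_mod_cast hnN
        have h4 : (n:ℝ) * |t| ≤ N * |t| := mul_le_mul_of_nonneg_right h3 (abs_nonneg _)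
        have h5 : (n:ℝ) * (-|t|) ≤ n * t :=
          mul_le_mul_of_nonneg_left (neg_abs_le t) (Nat.cast_nonneg _)
        linarith
      refine h1.trans ?_
      rw [mul_assoc]
      exact le_mul_of_one_le_right (by positivity) h2
  unfold MemMalphaB at hn
  by_cases hpos : ∀ f : X → ℝ, IsBddMeas f → (∀ x, 0 ≤ f x) → 0 ≤ μ f
  swap
  · push Not at hpos
    obtain ⟨f, hf, hf0, hneg⟩ := hpos
    refine ⟨1, fun _ => f, fun _ => hf, -μ f, by linarith, 0, fun n hn x h => ?_⟩
    have h1 := (abs_lt.1 (h 0)).2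
    have h2 : 0 ≤ birkhoff α f n x / n :=
      div_nonneg (Finset.sum_nonneg fun i _ => hf0 _) (Nat.cast_nonneg _)
    linarith
  by_cases hone : μ (fun _ => 1) = 1
  swap
  · refine ⟨1, fun _ _ => 1, fun _ => ⟨measurable_const, 1, by simp⟩, |1 - μ (fun _ => 1)|,
      abs_pos.2 (sub_ne_zero.2 (Ne.symm hone)), 0, fun n hn x h => ?_⟩
    have h1 := h 0
    have hnR : (n:ℝ) ≠ 0 := by exact_mod_cast hn.ne'
    have h2 : birkhoff α (fun _ => (1:ℝ)) n x / n = 1 := by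
      simp [birkhoff, hnR]
    rw [h2] at h1
    exact lt_irrefl _ h1
  have : ∃ f : X → ℝ, IsBddMeas f ∧ μ (f ∘ α) ≠ μ f := by
    by_contra hcon
    push Not at hcon
    exact hn ⟨hμ, hpos, hone, hcon⟩
  obtain ⟨f, hf, hne⟩ := this
  obtain ⟨b, hb⟩ := hf.2
  set d := |μ (f ∘ α) - μ f| with hd
  have hdp : 0 < d := abs_pos.2 (sub_ne_zero.2 hne)
  obtain ⟨N, hN⟩ := exists_nat_gt (6 * b / d)
  refine ⟨2, ![f, f ∘ α], ?_, d / 3, by positivity, N, fun n hnN x h => ?_⟩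
  · intro i
    fin_cases i
    · exact hf
    · exact ⟨hf.1.comp hα, b, fun x => hb _⟩
  · have h0 := h 0
    have h1 := h 1
    simp only [Matrix.cons_val_zero, Matrix.cons_val_one] at h0 h1
    have hnR : (0:ℝ) < n := by exact_mod_cast (Nat.zero_le N).trans_lt hnN
    have hNn : (N:ℝ) < n := by exact_mod_cast hnN
    have e : birkhoff α (f ∘ α) n x / n - birkhoff α f n x / n = (f (α^[n] x) - f x) / n := by
      rw [← sub_div]
      congr 1
      unfold birkhoff
      rw [← Finset.sum_sub_distrib]
      have := Finset.sum_range_sub (fun i => f (α^[i] x)) n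
      simp only [Function.iterate_zero, id] at this
      rw [← this]
      apply Finset.sum_congr rfl
      intro i _
      simp only [Function.comp, Function.iterate_succ_apply']
    have h2 : |(f (α^[n] x) - f x) / n| ≤ d / 3 := by
      rw [abs_div, abs_of_pos hnR, div_le_iff₀ hnR]
      have h3 : |f (α^[n] x) - f x| ≤ b + b := (abs_sub _ _).trans (add_le_add (hb _) (hb _))
      have h4 : 6 * b < n * d := by
        rw [← div_lt_iff₀ hdp]; linarith
      linarith
    rw [← e] at h2
    have h0' := abs_lt.1 h0
    have h1' := abs_lt.1 h1
    have h2' := abs_le.1 h2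
    have : |μ (f ∘ α) - μ f| < d := by
      rw [abs_lt]
      constructor <;> linarith [h0'.1, h0'.2, h1'.1, h1'.2, h2'.1, h2'.2]
    exact lt_irrefl _ this

end ES2

/-- **Theorem 12 (entropy statistic theorem)**: for any continuous linear functional `μ` on
`B(X, 𝔄)` and any `ε > 0` there are a weak-* (basic) neighborhood of `μ` — described by
finitely many test functions `φs i ∈ B(X, 𝔄)` and a tolerance `η > 0` — and a constant
`C > 0` such that for all `n` and all `f ∈ L¹(X, m)`,
`∫_{Xₙ(O(μ))} |f ∘ αⁿ| dm ≤ C·e^{n(τ(μ)+ε)}·∫_X |f| dm`, where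
`Xₙ(O(μ)) = {x | δ_{x,n} ∈ O(μ)} = {x | ∀ i, |δ_{x,n}[φs i] − μ[φs i]| < η}`; if
`τ(μ) = −∞` the exponent `n(τ(μ)+ε)` is replaced by `n·(−1/ε)`. -/
theorem entropy_statistic_theorem
    {X : Type*} [MeasurableSpace X] (m : Measure X) (α : X → X)
    (hα : Measurable α) (hbdd : ShiftBounded m α)
    (μ : (X → ℝ) → ℝ) (hμ : IsBFunctional μ) (ε : ℝ) (hε : 0 < ε) :
    ∃ (k : ℕ) (φs : Fin k → X → ℝ) (_ : ∀ i, IsBddMeas (φs i)) (η : ℝ) (_ : 0 < η)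
      (C : ℝ) (_ : 0 < C),
      (tEntropyBExt m α μ ≠ ⊥ →
        ∀ n : ℕ, 0 < n → ∀ f : X → ℝ, Integrable f m →
          (∫ x in {x | ∀ i, |birkhoff α (φs i) n x / (n : ℝ) - μ (φs i)| < η},
              |f (α^[n] x)| ∂m) ≤
            C * Real.exp ((n : ℝ) * ((tEntropyBExt m α μ).toReal + ε)) *
              ∫ x, |f x| ∂m) ∧
      (tEntropyBExt m α μ = ⊥ →
        ∀ n : ℕ, 0 < n → ∀ f : X → ℝ, Integrable f m →
          (∫ x in {x | ∀ i, |birkhoff α (φs i) n x / (n : ℝ) - μ (φs i)| < η},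
              |f (α^[n] x)| ∂m) ≤
            C * Real.exp ((n : ℝ) * (-1 / ε)) * ∫ x, |f x| ∂m) := by
  obtain ⟨C, hC⟩ := es_bound hα hbdd
  by_cases hM : MemMalphaB α μ
  · have e : tEntropyBExt m α μ = tEntropyB m α μ := by
      unfold tEntropyBExt
      rw [if_pos hM]
    rw [e]
    have htop := es_entropy_lt_top hC hM
    by_cases hbot : tEntropyB m α μ = ⊥
    · obtain ⟨ψ, hψ, η, hη, K, hK, h⟩ := es_invariant_case hα hC hM (-1 / ε) (by
        rw [hbot]; exact EReal.bot_lt_coe _)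
      refine ⟨1, fun _ => ψ, fun _ => hψ, η, hη, K, hK, fun hne => absurd hbot hne, fun _ => ?_⟩
      simpa only [Fin.forall_fin_one] using h
    · obtain ⟨ψ, hψ, η, hη, K, hK, h⟩ := es_invariant_case hα hC hM
        ((tEntropyB m α μ).toReal + ε) (by
          have h1 := EReal.coe_toReal htop.ne hbot
          conv_lhs => rw [← h1]
          rw [EReal.coe_lt_coe_iff]
          linarith)
      refine ⟨1, fun _ => ψ, fun _ => hψ, η, hη, K, hK, fun _ => ?_, fun hb => absurd hb hbot⟩
      simpa only [Fin.forall_fin_one] using h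
  · have e : tEntropyBExt m α μ = ⊥ := by
      unfold tEntropyBExt
      rw [if_neg hM]
    obtain ⟨k, φs, hφ, η, hη, K, hK, h⟩ := es_noninvariant_case hC hα hμ hM (-1 / ε)
    exact ⟨k, φs, hφ, η, hη, K, hK, fun hne => absurd e hne, fun _ => h⟩

end
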